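/- The matroid M*(K_{3,3}), the dual of the cycle matroid of the complete bipartite graph K_{3,3}, is an excluded minor of \overline{BL}; in particular, there is no graph G with L(G) isomorphic to M*(K_{3,3}). -/

import Mathlib

/-!
Modulo 2, the vertex-edge incidence vectors of a graph represent its cycle matroid, so graphic
matroids can be handled by linear algebra over the field with two elements.

Let `M` be the cycle matroid of `K₃,₃`. Every dependent set of `M` has at least four elements, so in
a graph representing `M✶` every nonempty vertex star would have at least four edges. Since there
are nine edges, there would be at most four stars, and `M✶` would have rank at most three instead
of four. Hence `M✶` is not graphic.

Suppose a nonempty simple and cosimple matroid with binary dual has a bicircular lift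
representation. A basis `B` other than the ground set contains exactly one cycle `C`. Two distinct
edges of `C` would form the symmetric difference of two cocircuits and hence be codependent, so `C`
is a loop. Exchanging it yields a basis whose cycle is a second loop, and the two loops are
parallel in the matroid, a contradiction. As `M✶` is simple and cosimple with binary dual `M`, it
is not a bicircular lift matroid.

Finally, deleting or contracting an edge of `K₃,₃` leaves a planar graph, and the corresponding
minor of `M✶` is represented by its planar dual: the incidence vectors of the dual graph are
orthogonal to the cycles, and Euler's formula is the dimension count showing that they represent
the dual matroid.
-/

open Set Matroid

universe u

namespace BLFormal

/-! ### Matroid preliminaries -/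

/-- A circuit of a matroid: a minimal dependent set. -/
def Circuit {α : Type u} (M : Matroid α) (C : Set α) : Prop := Minimal M.Dep C

/-- Deletion of a set of elements from a matroid. -/
def del {α : Type u} (M : Matroid α) (D : Set α) : Matroid α := M ↾ (M.E \ D)

/-- Contraction of a set of elements of a matroid, defined by duality. -/
def con {α : Type u} (M : Matroid α) (C : Set α) : Matroid α := (del M✶ C)✶

/-- `N` is a minor of `M` if it is obtained by a contraction followed by a deletion. -/
def IsMinor {α : Type u} (N M : Matroid α) : Prop := ∃ C D : Set α, N = del (con M C) D

/-- `N` is a proper (strict) minor of `M`. -/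
def IsStrictMinor {α : Type u} (N M : Matroid α) : Prop := IsMinor N M ∧ N ≠ M

/-- The rank of a set `X` in the matroid `M`, as an extended natural number:
the supremum of the cardinalities of the independent subsets of `X`. -/
noncomputable def eRk {α : Type u} (M : Matroid α) (X : Set α) : ℕ∞ :=
  ⨆ I : {I : Set α // M.Indep I ∧ I ⊆ X}, (I : Set α).encard

/-- The rank `r(M)` of a matroid, as an extended natural number. -/
noncomputable def eRank {α : Type u} (M : Matroid α) : ℕ∞ := eRk M M.E

/-- A loop of a matroid. -/
def MLoop {α : Type u} (M : Matroid α) (e : α) : Prop := M.Dep {e}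

/-- A coloop of a matroid: a loop of the dual. -/
def MColoop {α : Type u} (M : Matroid α) (e : α) : Prop := MLoop M✶ e

/-- A `k`-separation of a matroid: a partition `(X, Y)` of the ground set with
`|X|, |Y| ≥ k` and `r(X) + r(Y) - r(M) ≤ k - 1`. -/
def IsKSep {α : Type u} (M : Matroid α) (k : ℕ) (X Y : Set α) : Prop :=
  X ∪ Y = M.E ∧ Disjoint X Y ∧ (k : ℕ∞) ≤ X.encard ∧ (k : ℕ∞) ≤ Y.encard ∧
    eRk M X + eRk M Y ≤ eRank M + ((k - 1 : ℕ) : ℕ∞)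

/-- A matroid is connected if it has no 1-separation. -/
def MConnected {α : Type u} (M : Matroid α) : Prop := ¬ ∃ X Y, IsKSep M 1 X Y

/-- A matroid is 3-connected if it is connected and has no 2-separation. -/
def ThreeConnected {α : Type u} (M : Matroid α) : Prop :=
  MConnected M ∧ ¬ ∃ X Y, IsKSep M 2 X Y

/-- Two elements of a matroid form a series pair if no circuit contains exactly one
of them, and some circuit contains both. -/
def SeriesPair {α : Type u} (M : Matroid α) (e f : α) : Prop :=
  (∀ C, Circuit M C → (e ∈ C ↔ f ∈ C)) ∧ ∃ C, Circuit M C ∧ e ∈ C ∧ f ∈ C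

/-- A series class: a maximal set in which every two elements form a series pair. -/
def IsSeriesClass {α : Type u} (M : Matroid α) (S : Set α) : Prop :=
  Maximal (fun T => T.Nonempty ∧ ∀ e ∈ T, ∀ f ∈ T, SeriesPair M e f) S

/-- `N` is a cosimplification `co(M)` of `M`: it is obtained from `M` by contracting
all coloops and, in each series class, all but one element. -/
def IsCosimplification {α : Type u} (M N : Matroid α) : Prop :=
  ∃ D ⊆ M.E, N = con M D ∧ (∀ e, MColoop M e → e ∈ D) ∧
    ∀ S, IsSeriesClass M S → ∃ x ∈ S, S \ D = {x}

/-- `M` is isomorphic to the uniform matroid `U_{k, n}`: the ground set has `n` elements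
and the circuits are precisely the `(k+1)`-element subsets of the ground set. -/
def IsUnif {α : Type u} (k n : ℕ) (M : Matroid α) : Prop :=
  M.E.encard = n ∧ ∀ C, Circuit M C ↔ C ⊆ M.E ∧ C.encard = k + 1

/-- `M` has a `U_{2,4}`-minor. -/
def HasU24Minor {α : Type u} (M : Matroid α) : Prop := ∃ N, IsMinor N M ∧ IsUnif 2 4 N

/-- `M` is isomorphic to the direct sum `U_{2,4} ⊕ U_{0,1}` of `U_{2,4}` and a loop:
its ground set consists of a 4-element set `X` together with one further element `l`,
and its circuits are `{l}` and the 3-element subsets of `X`. -/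
def IsU24PlusLoop {α : Type u} (M : Matroid α) : Prop :=
  ∃ (X : Set α) (l : α), l ∉ X ∧ M.E = insert l X ∧ X.encard = 4 ∧
    ∀ C, Circuit M C ↔ (C = {l} ∨ (C ⊆ X ∧ C.encard = 3))

/-- `M` is isomorphic to the Fano matroid `F₇`: the rank-3 matroid represented over
`GF(2)` by the seven nonzero vectors of `GF(2)³`. -/
def IsFano {α : Type u} (M : Matroid α) : Prop :=
  ∃ v : α → (Fin 3 → ZMod 2),
    Set.BijOn v M.E {w | w ≠ 0} ∧
    ∀ I ⊆ M.E, (M.Indep I ↔ LinearIndependent (ZMod 2) (fun x : I => v x))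

/-! ### Graphs (with loops and parallel edges allowed) -/

/-- A graph on vertex type `V`, with edge set `E` living in the ambient edge type `α`;
each edge is sent to the unordered pair of its end-vertices. -/
structure Graph (V : Type u) (α : Type u) where
  E : Set α
  inc : α → Sym2 V

namespace Graph

variable {V : Type u} {α : Type u}

/-- The vertices incident with an edge set `C`. -/
def vertsOf (G : Graph V α) (C : Set α) : Set V := {v | ∃ e ∈ C, v ∈ G.inc e}

/-- The vertex set of a graph (we consider graphs without isolated vertices). -/
def verts (G : Graph V α) : Set V := G.vertsOf G.E

/-- Deletion of a set of edges from a graph. -/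
def delete (G : Graph V α) (D : Set α) : Graph V α := ⟨G.E \ D, G.inc⟩

/-- The degree of a vertex `v` in the edge set `C`, with loops counting twice. -/
noncomputable def deg (G : Graph V α) (C : Set α) (v : V) : ℕ :=
  {e ∈ C | v ∈ G.inc e}.ncard + {e ∈ C | G.inc e = Sym2.diag v}.ncard

/-- Two vertices are adjacent via an edge of `C`. -/
def AdjOn (G : Graph V α) (C : Set α) (u v : V) : Prop := ∃ e ∈ C, G.inc e = s(u, v)

/-- The subgraph with edge set `C` is connected. -/
def ConnectedOn (G : Graph V α) (C : Set α) : Prop :=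
  ∀ u ∈ G.vertsOf C, ∀ v ∈ G.vertsOf C, Relation.ReflTransGen (G.AdjOn C) u v

/-- `C` is a cycle of `G` : the edge set of a connected 2-regular subgraph. -/
def IsCycle (G : Graph V α) (C : Set α) : Prop :=
  C ⊆ G.E ∧ C.Finite ∧ C.Nonempty ∧ (∀ v ∈ G.vertsOf C, G.deg C v = 2) ∧ G.ConnectedOn C

/-- A graph is 2-edge-connected if each of its edges lies in a cycle. -/
def TwoEdgeConnected (G : Graph V α) : Prop := ∀ e ∈ G.E, ∃ C, G.IsCycle C ∧ e ∈ C

/-- A graph is connected if it has at least one vertex and any two of its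
vertices are joined by a path. -/
def Connected (G : Graph V α) : Prop := G.verts.Nonempty ∧ G.ConnectedOn G.E

/-- Delete a vertex from a graph (removing all edges incident with it). -/
def delVert (G : Graph V α) (v : V) : Graph V α := ⟨{e ∈ G.E | v ∉ G.inc e}, G.inc⟩

/-- A graph is 2-connected if it is connected and stays connected after the
deletion of any vertex. -/
def TwoConnected (G : Graph V α) : Prop :=
  G.Connected ∧ ∀ v ∈ G.verts, (G.delVert v).Connected

/-- `X` contains at least two (distinct) cycles of `G`. -/
def HasTwoCycles (G : Graph V α) (X : Set α) : Prop :=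
  ∃ C₁ C₂, G.IsCycle C₁ ∧ G.IsCycle C₂ ∧ C₁ ≠ C₂ ∧ C₁ ⊆ X ∧ C₂ ⊆ X

/-- The circuits of the bicircular lift matroid of `G`: edge sets containing at
least two cycles and minimal with this property. -/
def LiftCircuit (G : Graph V α) (X : Set α) : Prop :=
  Minimal (fun Y => Y ⊆ G.E ∧ G.HasTwoCycles Y) X

/-- Two edges of a graph form a series pair if no cycle contains exactly one of
them, and some cycle contains both. -/
def SeriesPair (G : Graph V α) (e f : α) : Prop :=
  (∀ C, G.IsCycle C → (e ∈ C ↔ f ∈ C)) ∧ ∃ C, G.IsCycle C ∧ e ∈ C ∧ f ∈ C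

end Graph

/-- `N` is the bicircular lift matroid `L(G)` of `G` : its ground set is `E(G)`
and its circuits are the lift circuits of `G`. -/
def IsLiftRep {V α : Type u} (G : Graph V α) (N : Matroid α) : Prop :=
  N.E = G.E ∧ ∀ C, Circuit N C ↔ G.LiftCircuit C

/-- `N` is the cycle matroid `M(G)` of `G` : its ground set is `E(G)` and its
circuits are the cycles of `G`. -/
def IsGraphicRep {V α : Type u} (G : Graph V α) (N : Matroid α) : Prop :=
  N.E = G.E ∧ ∀ C, Circuit N C ↔ G.IsCycle C

/-- A matroid is bicircular lift if it is (isomorphic to) `L(G)` for some graph `G`. -/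
def IsBicircularLift {α : Type u} (N : Matroid α) : Prop :=
  ∃ (V : Type u) (G : Graph V α), IsLiftRep G N

/-- A matroid is graphic if it is (isomorphic to) the cycle matroid of some graph. -/
def IsGraphic {α : Type u} (N : Matroid α) : Prop :=
  ∃ (V : Type u) (G : Graph V α), IsGraphicRep G N

/-- The class `BL-bar` of matroids that are graphic or bicircular lift. -/
def InBL {α : Type u} (N : Matroid α) : Prop := IsGraphic N ∨ IsBicircularLift N

/-- `M` is an excluded minor for the class `BL-bar`. -/
def ExcludedMinorBL {α : Type u} (M : Matroid α) : Prop :=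
  ¬ InBL M ∧ ∀ N, IsStrictMinor N M → InBL N

/-! ### Special graphs and subdivisions -/

/-- `G` is (a copy of) the complete graph `K₄`. -/
def IsK4 {V α : Type u} (G : Graph V α) : Prop :=
  ∃ v : Fin 4 → V, Function.Injective v ∧
    ∃ ed : {p : Sym2 (Fin 4) // ¬ p.IsDiag} → α, Function.Injective ed ∧
      G.E = Set.range ed ∧ ∀ p, G.inc (ed p) = Sym2.map v p.1

/-- `G` is (a copy of) the complete graph `K₅`. -/
def IsK5 {V α : Type u} (G : Graph V α) : Prop :=
  ∃ v : Fin 5 → V, Function.Injective v ∧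
    ∃ ed : {p : Sym2 (Fin 5) // ¬ p.IsDiag} → α, Function.Injective ed ∧
      G.E = Set.range ed ∧ ∀ p, G.inc (ed p) = Sym2.map v p.1

/-- `G` is (a copy of) the complete bipartite graph `K₃,₃`. -/
def IsK33 {V α : Type u} (G : Graph V α) : Prop :=
  ∃ a b : Fin 3 → V, Function.Injective a ∧ Function.Injective b ∧
    Set.range a ∩ Set.range b = ∅ ∧
    ∃ ed : Fin 3 × Fin 3 → α, Function.Injective ed ∧
      G.E = Set.range ed ∧ ∀ p, G.inc (ed p) = s(a p.1, b p.2)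

/-- `G` is (a copy of) the graph `K₂ⁿ` with two vertices joined by `n` parallel edges. -/
def IsK2n {V α : Type u} (n : ℕ) (G : Graph V α) : Prop :=
  ∃ u v : V, u ≠ v ∧ ∃ ed : Fin n → α, Function.Injective ed ∧
    G.E = Set.range ed ∧ ∀ i, G.inc (ed i) = s(u, v)

/-- `H` is obtained from `G` by subdividing a single edge. -/
def ElemSub {V α : Type u} (G H : Graph V α) : Prop :=
  ∃ e ∈ G.E, ∃ (f g : α) (u v w : V),
    G.inc e = s(u, v) ∧ w ∉ G.verts ∧ f ≠ g ∧
    f ∉ G.E \ {e} ∧ g ∉ G.E \ {e} ∧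
    H.E = (G.E \ {e}) ∪ {f, g} ∧
    H.inc f = s(u, w) ∧ H.inc g = s(w, v) ∧
    ∀ x ∈ G.E \ {e}, H.inc x = G.inc x

/-- `H` is a subdivision of `G` : it is obtained from `G` by repeatedly
subdividing edges. -/
def IsSubdivision {V α : Type u} (G H : Graph V α) : Prop :=
  Relation.ReflTransGen ElemSub G H

/-! ### 2-sums and simplification -/

/-- `N` is the 2-sum `N₁ ⊕₂ᵉ N₂` of `N₁` and `N₂` along `e`. -/
def Is2Sum {α : Type u} (N N₁ N₂ : Matroid α) (e : α) : Prop :=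
  N₁.E ∩ N₂.E = {e} ∧
  ¬ MLoop N₁ e ∧ ¬ MColoop N₁ e ∧ ¬ MLoop N₂ e ∧ ¬ MColoop N₂ e ∧
  N.E = (N₁.E ∪ N₂.E) \ {e} ∧
  ∀ C, Circuit N C ↔
    ((Circuit N₁ C ∧ e ∉ C) ∨ (Circuit N₂ C ∧ e ∉ C) ∨
      ∃ C₁ C₂, Circuit N₁ C₁ ∧ Circuit N₂ C₂ ∧ e ∈ C₁ ∧ e ∈ C₂ ∧
        C = (C₁ \ {e}) ∪ (C₂ \ {e}))

/-- `H` is a simplification `si(G)` of `G` : it is obtained from `G` by deleting all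
loops and all but one edge of each parallel class. -/
def IsSimplification {V α : Type u} (G H : Graph V α) : Prop :=
  H.inc = G.inc ∧ H.E ⊆ G.E ∧ (∀ e ∈ H.E, ¬ (G.inc e).IsDiag) ∧
    ∀ e ∈ G.E, ¬ (G.inc e).IsDiag → ∃! f, f ∈ H.E ∧ G.inc f = G.inc e

/-- `H` is 2-connected, or is obtained from a 2-connected graph and a single edge `K₂`
by identifying one end-vertex of the edge with a vertex of the 2-connected graph. -/
def TwoConnOrPendant {V α : Type u} (H : Graph V α) : Prop :=
  H.TwoConnected ∨
    ∃ (e : α) (u w : V), e ∈ H.E ∧ H.inc e = s(u, w) ∧ u ≠ w ∧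
      (H.delete {e}).TwoConnected ∧ u ∈ (H.delete {e}).verts ∧ w ∉ (H.delete {e}).verts

/-! ### Linear representations of matroids -/

section LinearRep

variable {α K U W : Type*} [Field K] [AddCommGroup U] [Module K U] [AddCommGroup W] [Module K W]
  {M : Matroid α} {v : α → U} {w : α → W}

/-- The vectors `v e`, for `e` in the ground set, represent the matroid `M` over the field `K`.
The values of `v` outside the ground set are irrelevant. -/
def IsLinearRep (K : Type*) {α U : Type*} [Field K] [AddCommGroup U] [Module K U]
    (v : α → U) (M : Matroid α) : Prop :=
  ∀ I ⊆ M.E, M.Indep I ↔ LinearIndepOn K v I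

namespace IsLinearRep

lemma mem_span_of_isBasis (hv : IsLinearRep K v M) {I X : Set α} (hI : M.IsBasis I X) {e : α}
    (he : e ∈ X) : v e ∈ Submodule.span K (v '' I) := by
  by_cases heI : e ∈ I
  · exact Submodule.subset_span (mem_image_of_mem v heI)
  · have hdep := hI.insert_dep ⟨he, heI⟩
    have hnot := mt (hv _ hdep.subset_ground).2 hdep.not_indep
    rw [linearIndepOn_insert heI, not_and_not_right] at hnot
    exact hnot ((hv _ hI.indep.subset_ground).1 hI.indep)

lemma span_image_eq_of_isBasis (hv : IsLinearRep K v M) {I X : Set α} (hI : M.IsBasis I X) :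
    Submodule.span K (v '' I) = Submodule.span K (v '' X) := by
  refine (Submodule.span_mono (image_mono hI.subset)).antisymm (Submodule.span_le.2 ?_)
  rintro _ ⟨e, he, rfl⟩
  exact hv.mem_span_of_isBasis hI he

lemma delete (hv : IsLinearRep K v M) (D : Set α) : IsLinearRep K v (M ＼ D) := fun I hI => by
  rw [delete_indep_iff, and_iff_left (disjoint_of_subset_left hI disjoint_sdiff_left)]
  exact hv I (hI.trans sdiff_subset)

lemma contract (hv : IsLinearRep K v M) {C : Set α} (hC : C ⊆ M.E) (f : U →ₗ[K] W)
    (hf : LinearMap.ker f = Submodule.span K (v '' C)) : IsLinearRep K (f ∘ v) (M ／ C) := by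
  intro I hI
  obtain ⟨J, hJ⟩ := M.exists_isBasis C
  have hdisj : Disjoint C I := (disjoint_of_subset_left hI disjoint_sdiff_left).symm
  have hspan := hv.span_image_eq_of_isBasis hJ
  have hfac : f ∘ v = (Submodule.liftQ _ f hf.ge) ∘ (Submodule.span K (v '' C)).mkQ ∘ v := by
    ext; simp
  have hinj : Function.Injective (Submodule.liftQ (Submodule.span K (v '' C)) f hf.ge) :=
    LinearMap.ker_eq_bot.1 (Submodule.ker_liftQ_eq_bot _ _ _ hf.le)
  rw [hJ.contract_indep_iff, and_iff_left hdisj, union_comm,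
    hv _ (union_subset hJ.indep.subset_ground (hI.trans sdiff_subset)),
    linearIndepOn_union_iff_quotient (disjoint_of_subset_left hJ.subset hdisj),
    and_iff_right ((hv _ hJ.indep.subset_ground).1 hJ.indep), hspan, hfac,
    LinearMap.linearIndepOn_iff_of_injOn _ hinj.injOn]

lemma dual_indep_iff (hv : IsLinearRep K v M) {X : Set α} (hX : X ⊆ M.E) :
    M✶.Indep X ↔ ∀ x ∈ X, v x ∈ Submodule.span K (v '' (M.E \ X)) := by
  rw [dual_indep_iff_exists hX]
  constructor
  · rintro ⟨B, hB, hXB⟩ x hx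
    exact Submodule.span_mono (image_mono (subset_sdiff.2 ⟨hB.subset_ground, hXB.symm⟩))
      (hv.mem_span_of_isBasis hB.isBasis_ground (hX hx))
  · intro h
    obtain ⟨B, hB⟩ := M.exists_isBasis (M.E \ X)
    refine ⟨B, hB.indep.isBase_of_forall_insert fun e he hind => ?_,
      (disjoint_of_subset_left hB.subset disjoint_sdiff_left).symm⟩
    have hmem : v e ∈ Submodule.span K (v '' B) := by
      by_cases heX : e ∈ X
      · exact hv.span_image_eq_of_isBasis hB ▸ h e heX
      · exact hv.mem_span_of_isBasis hB ⟨he.1, heX⟩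
    rw [hv _ (insert_subset he.1 hB.indep.subset_ground), linearIndepOn_insert he.2] at hind
    exact hind.2 hmem

lemma not_dual_indep_support (hv : IsLinearRep K v M) (φ : U →ₗ[K] K) {x : α} (hx : x ∈ M.E)
    (hφ : φ (v x) ≠ 0) : ¬M✶.Indep {e ∈ M.E | φ (v e) ≠ 0} := by
  rw [hv.dual_indep_iff (sep_subset _ _)]
  intro h
  refine hφ (Submodule.span_le (p := LinearMap.ker φ).2 ?_ (h x ⟨hx, hφ⟩))
  rintro _ ⟨e, ⟨heE, he⟩, rfl⟩
  by_contra hne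
  exact he ⟨heE, hne⟩

end IsLinearRep

lemma sum_ite_eq_sub_ite_mem_smul [DecidableEq α] {E B : Finset α} (hBE : B ⊆ E) {e : α}
    (he : e ∈ E) (c : α → K) (v : α → U) :
    ∑ f ∈ E, ((if f = e then 1 else 0) - (if f ∈ B then c f else 0)) • v f =
      v e - ∑ b ∈ B, c b • v b := by
  simp only [sub_smul, Finset.sum_sub_distrib, ite_smul, one_smul, zero_smul,
    Finset.sum_ite_eq', if_pos he, Finset.sum_ite_mem, Finset.inter_eq_right.2 hBE]

lemma linearIndepOn_sdiff_of_orthogonal {E B : Finset α} (hBE : B ⊆ E)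
    (hspan : ∀ e ∈ E, v e ∈ Submodule.span K (v '' B))
    (horth : ∀ x y : α → K, ∑ e ∈ E, x e • v e = 0 → ∑ e ∈ E, y e • w e = 0 →
      ∑ e ∈ E, x e * y e = 0) :
    LinearIndepOn K w (E \ B : Set α) := by
  classical
  rw [linearIndepOn_iff'']
  intro t y ht hyt hy e he
  have heE : e ∈ E := (ht he).1
  have hyB : ∀ b ∈ B, y b = 0 := fun b hb => hyt b fun hbt => (ht hbt).2 hb
  have hyE : ∑ f ∈ E, y f • w f = 0 := by
    rw [← hy]
    exact (Finset.sum_subset (fun f hf => (ht hf).1) fun f _ hf => by rw [hyt f hf, zero_smul]).symm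
  obtain ⟨c, hc⟩ := (Submodule.mem_span_image_finset_iff_exists_fun' K).1 (hspan e heE)
  have hzero := horth _ y (by
    rw [sum_ite_eq_sub_ite_mem_smul hBE heE, hc, sub_self]) hyE
  have hBzero : ∑ b ∈ B, c b • y b = 0 :=
    Finset.sum_eq_zero fun b hb => by rw [hyB b hb, smul_zero]
  simpa only [← smul_eq_mul, sum_ite_eq_sub_ite_mem_smul hBE heE, hBzero, sub_zero] using hzero

lemma ncard_eq_finrank_span {s : Set α} (hs : s.Finite) (h : LinearIndepOn K v s) :
    s.ncard = Module.finrank K (Submodule.span K (v '' s)) := by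
  have := hs.fintype
  rw [image_eq_range, finrank_span_eq_card h, Fintype.card_eq_nat_card, Nat.card_coe_set_eq]

theorem IsLinearRep.dual {E : Finset α} (hE : M.E = E) (hv : IsLinearRep K v M) {B : Set α}
    (hB : M.IsBase B) (hrank : B.ncard + Module.finrank K (Submodule.span K (w '' E)) ≤ E.card)
    (horth : ∀ x y : α → K, ∑ e ∈ E, x e • v e = 0 → ∑ e ∈ E, y e • w e = 0 →
      ∑ e ∈ E, x e * y e = 0) :
    IsLinearRep K w M✶ := by
  intro I hI
  rw [dual_ground, hE] at hI
  constructor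
  · intro hind
    obtain ⟨B', hB', hdisj⟩ := (dual_indep_iff_exists (hE ▸ hI)).1 hind
    have hBE := hE ▸ hB'.subset_ground
    lift B' to Finset α using E.finite_toSet.subset hBE
    refine (linearIndepOn_sdiff_of_orthogonal (v := v) (Finset.coe_subset.1 hBE) (fun e he => ?_)
      horth).mono (subset_sdiff.2 ⟨hI, hdisj⟩)
    exact hv.mem_span_of_isBasis hB'.isBasis_ground (hE ▸ he)
  · intro hind
    obtain ⟨J, hJE, hIJ, hEJ, hJ⟩ := exists_linearIndepOn_extension hind hI
    lift J to Finset α using E.finite_toSet.subset hJE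
    have hspan : Submodule.span K (w '' J) = Submodule.span K (w '' E) :=
      (Submodule.span_mono (image_mono hJE)).antisymm (Submodule.span_le.2 hEJ)
    have hJcard := ncard_eq_finrank_span J.finite_toSet hJ
    have hcompl : M.Indep (E \ J) := by
      rw [hv _ (hE ▸ sdiff_subset)]
      refine linearIndepOn_sdiff_of_orthogonal (v := w) (Finset.coe_subset.1 hJE)
        (fun e he => hEJ (mem_image_of_mem w he)) fun x y hx hy => ?_
      simpa only [mul_comm] using horth y x hy hx
    obtain ⟨B', hB', hsub⟩ := hcompl.exists_isBase_superset
    have hB'fin : B'.Finite := E.finite_toSet.subset (hE ▸ hB'.subset_ground)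
    have hcard := Set.ncard_sdiff_add_ncard_of_subset hJE
    rw [Set.ncard_coe_finset E] at hcard
    have heq : (E \ J : Set α) = B' := Set.eq_of_subset_of_ncard_le hsub (by
      rw [hB'.ncard_eq_ncard_of_isBase hB]; rw [hspan] at hJcard; omega) hB'fin
    exact (dual_indep_iff_exists (hE ▸ hI)).2
      ⟨B', hB', heq ▸ disjoint_of_subset_left hIJ disjoint_sdiff_right⟩

end LinearRep

section CharTwo

variable {α U : Type*} [AddCommGroup U] [Module (ZMod 2) U] {M : Matroid α} {v : α → U}

lemma linearIndepOn_zmod_two_iff {s : Set α} :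
    LinearIndepOn (ZMod 2) v s ↔ ∀ t : Finset α, ↑t ⊆ s → ∑ e ∈ t, v e = 0 → t = ∅ := by
  rw [linearIndepOn_iff']
  constructor
  · intro h t hts ht
    refine Finset.eq_empty_of_forall_notMem fun e he => one_ne_zero (α := ZMod 2) ?_
    exact h t 1 hts (by simpa only [Pi.one_apply, one_smul] using ht) e he
  · intro h t c hts hc e he
    by_contra hce
    have hone : ∀ f ∈ t.filter (c · ≠ 0), c f • v f = v f := fun f hf => by
      have hone : ∀ a : ZMod 2, a ≠ 0 → a = 1 := by decide
      rw [hone (c f) (Finset.mem_filter.1 hf).2, one_smul]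
    have hempty := h (t.filter (c · ≠ 0)) ((Finset.coe_subset.2 (t.filter_subset _)).trans hts) (by
      rw [← Finset.sum_congr rfl hone,
        Finset.sum_filter_of_ne fun f _ hf => left_ne_zero_of_smul hf, hc])
    exact Finset.notMem_empty e (hempty ▸ Finset.mem_filter.2 ⟨he, hce⟩)

lemma sum_symmDiff_of_zmod_two [DecidableEq α] (s t : Finset α) :
    ∑ e ∈ symmDiff s t, v e = ∑ e ∈ s, v e + ∑ e ∈ t, v e := by
  have hdouble : ∑ e ∈ s ∩ t, v e + ∑ e ∈ s ∩ t, v e = 0 := ZModModule.add_self _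
  rw [Finset.symmDiff_def, Finset.sum_union disjoint_sdiff_sdiff,
    ← Finset.sum_inter_add_sum_sdiff s t, ← Finset.sum_inter_add_sum_sdiff t s,
    Finset.inter_comm t s, add_add_add_comm, hdouble, zero_add]

lemma IsLinearRep.exists_finset_of_isCircuit (hv : IsLinearRep (ZMod 2) v M) {C : Set α}
    (hC : M.IsCircuit C) : ∃ t : Finset α, ↑t = C ∧ ∑ e ∈ t, v e = 0 := by
  have hnot := mt (hv C hC.subset_ground).2 hC.not_indep
  rw [linearIndepOn_zmod_two_iff] at hnot
  push Not at hnot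
  obtain ⟨t, htC, hsum, hne⟩ := hnot
  refine ⟨t, hC.eq_of_dep_subset ⟨fun hind => ?_, htC.trans hC.subset_ground⟩ htC, hsum⟩
  exact hne.ne_empty (linearIndepOn_zmod_two_iff.1
    ((hv _ (htC.trans hC.subset_ground)).1 hind) t subset_rfl hsum)

end CharTwo

/-! ### Cycles and incidence vectors -/

namespace Graph

variable {V α : Type u} {G : Graph V α} {R : Type*} [Semiring R]

/-- The incidence vector of an edge: the sum of its two ends, so that a loop at `u` contributes
`2` at `u`. -/
noncomputable def incVec (R : Type*) [Semiring R] (G : Graph V α) (e : α) : V →₀ R :=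
  Sym2.lift ⟨fun u w => Finsupp.single u 1 + Finsupp.single w 1, fun _ _ => add_comm _ _⟩ (G.inc e)

lemma exists_inc_eq (G : Graph V α) (e : α) : ∃ u w, G.inc e = s(u, w) :=
  Sym2.exists.1 ⟨_, rfl⟩

lemma incVec_eq_of_inc_eq {e : α} {u w : V} (h : G.inc e = s(u, w)) :
    G.incVec R e = Finsupp.single u 1 + Finsupp.single w 1 := by
  rw [incVec, h, Sym2.lift_mk]

lemma incVec_apply_eq_zero {e : α} {v : V} (h : v ∉ G.inc e) : G.incVec R e v = 0 := by
  obtain ⟨u, w, huw⟩ := G.exists_inc_eq e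
  rw [huw, Sym2.mem_iff, not_or] at h
  rw [incVec_eq_of_inc_eq huw, Finsupp.add_apply, Finsupp.single_eq_of_ne h.1,
    Finsupp.single_eq_of_ne h.2, add_zero]

open Classical in
lemma incVec_apply (e : α) (v : V) :
    G.incVec R e v = (if v ∈ G.inc e then 1 else 0) + if G.inc e = Sym2.diag v then 1 else 0 := by
  obtain ⟨u, w, huw⟩ := G.exists_inc_eq e
  simp only [incVec_eq_of_inc_eq huw, huw, Finsupp.add_apply, Finsupp.single_apply, Sym2.diag,
    Sym2.mem_iff, Sym2.eq_iff, or_self]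
  by_cases hu : u = v <;> by_cases hw : w = v <;> simp [hu, hw, eq_comm (a := v)]

lemma natCast_deg (C : Finset α) (v : V) : (G.deg C v : R) = (∑ e ∈ C, G.incVec R e) v := by
  classical
  simp only [deg, Finset.mem_coe, ← Finset.coe_filter, Set.ncard_coe_finset, Nat.cast_add,
    Finset.natCast_card_filter, Finsupp.finsetSum_apply, incVec_apply, Finset.sum_add_distrib]

lemma deg_eq_zero {C : Finset α} {v : V} (h : v ∉ G.vertsOf C) : G.deg C v = 0 := by
  rw [← Nat.cast_id (G.deg C v), natCast_deg, Finsupp.finsetSum_apply]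
  exact Finset.sum_eq_zero fun e he => incVec_apply_eq_zero fun hv => h ⟨e, he, hv⟩

lemma deg_pos {C : Finset α} {v : V} (h : v ∈ G.vertsOf C) : 0 < G.deg C v := by
  obtain ⟨e, he, hv⟩ := h
  exact Nat.add_pos_left ((Set.ncard_pos (C.finite_toSet.sep _)).2 ⟨e, he, hv⟩) _

lemma vertsOf_coe (C : Finset α) : G.vertsOf C = (∑ e ∈ C, G.incVec ℕ e).support := by
  ext v
  rw [Finset.mem_coe, Finsupp.mem_support_iff, ← natCast_deg, Nat.cast_id]
  exact ⟨fun h => (deg_pos h).ne', fun h => not_imp_comm.1 deg_eq_zero h⟩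

lemma sum_deg {C : Finset α} {T : Finset V} (hT : G.vertsOf C ⊆ T) :
    ∑ v ∈ T, G.deg C v = 2 * C.card := by
  have hends : ∀ e ∈ C, ∑ v ∈ T, G.incVec ℕ e v = 2 := by
    intro e he
    obtain ⟨u, w, huw⟩ := G.exists_inc_eq e
    have hu : u ∈ T := hT ⟨e, he, by simp [huw]⟩
    have hw : w ∈ T := hT ⟨e, he, by simp [huw]⟩
    classical
    simp [incVec_eq_of_inc_eq huw, Finsupp.single_apply, Finset.sum_add_distrib, hu, hw]
  have hdeg : ∀ v, G.deg C v = ∑ e ∈ C, G.incVec ℕ e v := fun v => by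
    rw [← Finsupp.finsetSum_apply, ← natCast_deg, Nat.cast_id]
  simp_rw [hdeg]
  rw [Finset.sum_comm, Finset.sum_congr rfl hends, Finset.sum_const, smul_eq_mul, mul_comm]

lemma sum_incVec_eq_zero_iff {C : Finset α} :
    ∑ e ∈ C, G.incVec (ZMod 2) e = 0 ↔ ∀ v, 2 ∣ G.deg C v := by
  simp only [Finsupp.ext_iff, ← natCast_deg, Finsupp.zero_apply, ZMod.natCast_eq_zero_iff]

/-- Modulo 2, an edge vector `a + b` equals `(a + r) + (b + r)`, so `|T| - 1` vectors suffice. -/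
lemma finrank_span_incVec_lt {X : Set α} {T : Finset V} (hT : T.Nonempty)
    (hX : ∀ e ∈ X, ∀ v, G.incVec (ZMod 2) e v ≠ 0 → v ∈ T) :
    Module.finrank (ZMod 2) (Submodule.span (ZMod 2) (G.incVec (ZMod 2) '' X)) < T.card := by
  classical
  obtain ⟨r, hr⟩ := hT
  let b : V → V →₀ ZMod 2 := fun v => Finsupp.single v 1 + Finsupp.single r 1
  let S := Submodule.span (ZMod 2) ((T.erase r).image b : Set (V →₀ ZMod 2))
  have hb : ∀ v ∈ T, b v ∈ S := fun v hv => by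
    by_cases hvr : v = r
    · simp only [b, hvr, ZModModule.add_self, S.zero_mem]
    · exact Submodule.subset_span
        (Finset.mem_coe.2 (Finset.mem_image_of_mem b (Finset.mem_erase.2 ⟨hvr, hv⟩)))
  have hle : Submodule.span (ZMod 2) (G.incVec (ZMod 2) '' X) ≤ S := by
    rw [Submodule.span_le]
    rintro _ ⟨e, he, rfl⟩
    obtain ⟨u, w, huw⟩ := G.exists_inc_eq e
    have hsupp := hX e he
    rw [incVec_eq_of_inc_eq huw] at hsupp ⊢
    by_cases hne : u = w
    · rw [hne, ZModModule.add_self]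
      exact S.zero_mem
    · have hsum : Finsupp.single u 1 + Finsupp.single w 1 = b u + b w := by
        rw [add_add_add_comm, ZModModule.add_self (Finsupp.single r (1 : ZMod 2)), add_zero]
      rw [hsum]
      exact S.add_mem (hb u (hsupp u (by simp [hne]))) (hb w (hsupp w (by simp [Ne.symm hne])))
  calc Module.finrank (ZMod 2) (Submodule.span (ZMod 2) (G.incVec (ZMod 2) '' X))
      ≤ Module.finrank (ZMod 2) S := Submodule.finrank_mono hle
    _ ≤ ((T.erase r).image b).card := finrank_span_finset_le_card _
    _ ≤ (T.erase r).card := Finset.card_image_le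
    _ < T.card := Finset.card_erase_lt_of_mem hr

lemma sum_filter_incVec_eq_zero {C : Finset α} {P : V → Prop}
    [DecidablePred fun e => ∃ v ∈ G.inc e, P v] (hC : ∑ e ∈ C, G.incVec (ZMod 2) e = 0)
    (hP : ∀ u w, G.AdjOn C u w → P u → P w) :
    ∑ e ∈ C with ∃ v ∈ G.inc e, P v, G.incVec (ZMod 2) e = 0 := by
  classical
  have hfilter : ∀ e ∈ C, Finsupp.filterAddHom P (G.incVec (ZMod 2) e) =
      if ∃ v ∈ G.inc e, P v then G.incVec (ZMod 2) e else 0 := by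
    intro e he
    obtain ⟨u, w, huw⟩ := G.exists_inc_eq e
    have hiff : P u ↔ P w := ⟨hP u w ⟨e, he, huw⟩, hP w u ⟨e, he, huw.trans Sym2.eq_swap⟩⟩
    have hex : (∃ v ∈ G.inc e, P v) ↔ P w := by simp [huw, hiff]
    change (G.incVec (ZMod 2) e).filter P = _
    rw [incVec_eq_of_inc_eq huw, Finsupp.filter_add]
    by_cases hw : P w <;> simp [hex, hiff, hw]
  rw [Finset.sum_filter, ← Finset.sum_congr rfl hfilter, ← map_sum, hC, map_zero]

lemma IsCycle.sum_incVec_eq_zero {C : Finset α} (hC : G.IsCycle C) :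
    ∑ e ∈ C, G.incVec (ZMod 2) e = 0 := by
  refine sum_incVec_eq_zero_iff.2 fun v => ?_
  by_cases hv : v ∈ G.vertsOf C
  · rw [hC.2.2.2.1 v hv]
  · rw [deg_eq_zero hv]
    exact dvd_zero 2

lemma deg_add_deg_sdiff [DecidableEq α] {C D : Finset α} (hDC : D ⊆ C) (v : V) :
    G.deg D v + G.deg (C \ D : Finset α) v = G.deg C v := by
  simpa only [← natCast_deg, Nat.cast_id, add_comm, Finsupp.add_apply] using
    DFunLike.congr_fun (Finset.sum_sdiff hDC (f := G.incVec ℕ)) v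

lemma IsCycle.mem_of_mem_vertsOf {C D : Finset α} (hC : G.IsCycle C) (hDC : D ⊆ C)
    (hD : ∑ e ∈ D, G.incVec (ZMod 2) e = 0) {v : V} (hv : v ∈ G.vertsOf D) {e : α} (he : e ∈ C)
    (hve : v ∈ G.inc e) : e ∈ D := by
  classical
  by_contra heD
  have hDdeg : 2 ≤ G.deg D v := Nat.le_of_dvd (deg_pos hv) (sum_incVec_eq_zero_iff.1 hD v)
  have hrest : 0 < G.deg (C \ D : Finset α) v := deg_pos ⟨e, Finset.mem_sdiff.2 ⟨he, heD⟩, hve⟩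
  have hsum := deg_add_deg_sdiff (G := G) hDC v
  have htwo : G.deg C v = 2 := hC.2.2.2.1 v ⟨e, he, hve⟩
  omega

lemma IsCycle.eq_of_subset {C D : Finset α} (hC : G.IsCycle C) (hDC : D ⊆ C) (hne : D.Nonempty)
    (hD : ∑ e ∈ D, G.incVec (ZMod 2) e = 0) : D = C := by
  obtain ⟨d, hd⟩ := hne
  obtain ⟨u, w, huw⟩ := G.exists_inc_eq d
  have hu : u ∈ G.inc d := huw ▸ Sym2.mem_mk_left _ _
  have hreach : ∀ v, Relation.ReflTransGen (G.AdjOn C) u v → v ∈ G.vertsOf D := by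
    intro v hv
    induction hv with
    | refl => exact ⟨d, hd, hu⟩
    | @tail x y _ hxy hx =>
      obtain ⟨e, he, hinc⟩ := hxy
      exact ⟨e, hC.mem_of_mem_vertsOf hDC hD hx he (hinc ▸ Sym2.mem_mk_left _ _),
        hinc ▸ Sym2.mem_mk_right _ _⟩
  refine hDC.antisymm fun e he => ?_
  obtain ⟨v, w, hvw⟩ := G.exists_inc_eq e
  have hv : v ∈ G.inc e := hvw ▸ Sym2.mem_mk_left _ _
  exact hC.mem_of_mem_vertsOf hDC hD (hreach v (hC.2.2.2.2 u ⟨d, hDC hd, hu⟩ v ⟨e, he, hv⟩)) he hv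

lemma deg_eq_two {C : Finset α} (hC : ∑ e ∈ C, G.incVec (ZMod 2) e = 0)
    (hmin : ∀ D ⊂ C, ∑ e ∈ D, G.incVec (ZMod 2) e = 0 → D = ∅) {v : V} (hv : v ∈ G.vertsOf C) :
    G.deg C v = 2 := by
  classical
  obtain ⟨e, he, -⟩ := id hv
  set T := (∑ e ∈ C, G.incVec ℕ e).support
  have hCT : G.vertsOf C = T := vertsOf_coe C
  have htwo : ∀ u ∈ T, 2 ≤ G.deg C u := fun u hu =>
    Nat.le_of_dvd (deg_pos (hCT.superset hu)) (sum_incVec_eq_zero_iff.1 hC u)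
  have hcard : C.card ≤ T.card := by
    have hindep : LinearIndepOn (ZMod 2) (G.incVec (ZMod 2)) (C.erase e : Finset α) :=
      linearIndepOn_zmod_two_iff.2 fun D hD => hmin D
        ((Finset.coe_subset.1 hD).trans_ssubset (Finset.erase_ssubset he))
    have hlt := finrank_span_incVec_lt (G := G) (X := C.erase e) (T := T) ⟨v, hCT.subset hv⟩
      fun f hf u hu => hCT.subset
        ⟨f, Finset.erase_subset _ _ hf, not_imp_comm.1 incVec_apply_eq_zero hu⟩
    rw [← ncard_eq_finrank_span (Finset.finite_toSet _) hindep, Set.ncard_coe_finset,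
      Finset.card_erase_of_mem he] at hlt
    omega
  have hsum : ∑ u ∈ T, 2 = ∑ u ∈ T, G.deg C u := by
    refine (Finset.sum_le_sum htwo).antisymm ?_
    rw [sum_deg hCT.subset, Finset.sum_const, smul_eq_mul]
    omega
  exact ((Finset.sum_eq_sum_iff_of_le htwo).1 hsum v (hCT.subset hv)).symm

lemma isCycle_of_minimal {C : Finset α} (hCE : ↑C ⊆ G.E) (hne : C.Nonempty)
    (hC : ∑ e ∈ C, G.incVec (ZMod 2) e = 0)
    (hmin : ∀ D ⊂ C, ∑ e ∈ D, G.incVec (ZMod 2) e = 0 → D = ∅) : G.IsCycle C := by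
  classical
  refine ⟨hCE, C.finite_toSet, hne, fun v => deg_eq_two hC hmin, fun u hu w hw => ?_⟩
  set D := C.filter fun e => ∃ v ∈ G.inc e, Relation.ReflTransGen (G.AdjOn C) u v
  have hDsum : ∑ e ∈ D, G.incVec (ZMod 2) e = 0 :=
    sum_filter_incVec_eq_zero hC fun _ _ hadj hreach => hreach.tail hadj
  have hDC : D = C := by
    obtain ⟨e, he, hue⟩ := hu
    by_contra hDC
    exact Finset.notMem_empty e (hmin D ((Finset.filter_subset _ _).ssubset_of_ne hDC) hDsum ▸
      Finset.mem_filter.2 ⟨he, u, hue, .refl⟩)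
  obtain ⟨e, he, hwe⟩ := hw
  obtain ⟨-, v, hve, huv⟩ := Finset.mem_filter.1 (hDC ▸ he : e ∈ D)
  by_cases hvw : v = w
  · exact hvw ▸ huv
  · exact huv.tail ⟨e, he, (Sym2.mem_and_mem_iff hvw).1 ⟨hve, hwe⟩⟩

lemma exists_isCycle_subset {D : Finset α} (hDE : ↑D ⊆ G.E) (hne : D.Nonempty)
    (hD : ∑ e ∈ D, G.incVec (ZMod 2) e = 0) : ∃ C ⊆ D, G.IsCycle C := by
  induction D using Finset.strongInduction with
  | H D ih =>
    by_cases hmin : ∀ D' ⊂ D, ∑ e ∈ D', G.incVec (ZMod 2) e = 0 → D' = ∅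
    · exact ⟨D, subset_rfl, isCycle_of_minimal hDE hne hD hmin⟩
    · push Not at hmin
      obtain ⟨D', hD'D, hsum, hD'⟩ := hmin
      obtain ⟨C, hCD', hC⟩ := ih D' hD'D ((Finset.coe_subset.2 hD'D.subset).trans hDE) hD' hsum
      exact ⟨C, hCD'.trans hD'D.subset, hC⟩

lemma linearIndepOn_incVec_iff {I : Set α} (hI : I ⊆ G.E) :
    LinearIndepOn (ZMod 2) (G.incVec (ZMod 2)) I ↔ ∀ C ⊆ I, ¬G.IsCycle C := by
  rw [linearIndepOn_zmod_two_iff]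
  constructor
  · intro h C hCI hC
    lift C to Finset α using hC.2.1
    exact hC.2.2.1.ne_empty (Finset.coe_eq_empty.2 (h C hCI hC.sum_incVec_eq_zero))
  · intro h D hDI hD
    by_contra hne
    obtain ⟨C, hCD, hC⟩ :=
      exists_isCycle_subset (hDI.trans hI) (Finset.nonempty_iff_ne_empty.2 hne) hD
    exact h C ((Finset.coe_subset.2 hCD).trans hDI) hC

lemma IsCycle.eq_of_isCycle_subset {C D : Set α} (hC : G.IsCycle C) (hD : G.IsCycle D)
    (hDC : D ⊆ C) : D = C := by
  lift C to Finset α using hC.2.1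
  lift D to Finset α using hD.2.1
  exact congrArg _ (hC.eq_of_subset (Finset.coe_subset.1 hDC) hD.2.2.1 hD.sum_incVec_eq_zero)

end Graph

lemma isGraphicRep_iff {V α : Type u} {G : Graph V α} {M : Matroid α} :
    IsGraphicRep G M ↔ M.E = G.E ∧ IsLinearRep (ZMod 2) (G.incVec (ZMod 2)) M := by
  refine and_congr_right fun hE => ⟨fun h I hI => ?_, fun h C => ?_⟩
  · rw [Graph.linearIndepOn_incVec_iff (hE ▸ hI), M.indep_iff_forall_subset_not_isCircuit hI]
    exact forall₂_congr fun C _ => not_congr (h C)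
  · have hdep : ∀ X, M.Dep X ↔ X ⊆ G.E ∧ ∃ D ⊆ X, G.IsCycle D := fun X => by
      rw [Dep, hE, and_comm]
      refine and_congr_right fun hX => ?_
      rw [h X (hE ▸ hX), Graph.linearIndepOn_incVec_iff hX]
      push Not
      rfl
    constructor
    · intro hC
      obtain ⟨-, D, hDC, hD⟩ := (hdep C).1 hC.prop
      exact (hC.eq_of_subset ((hdep D).2 ⟨hD.1, D, subset_rfl, hD⟩) hDC) ▸ hD
    · intro hC
      refine ⟨(hdep C).2 ⟨hC.1, C, subset_rfl, hC⟩, fun X hX hXC => ?_⟩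
      obtain ⟨-, D, hDX, hD⟩ := (hdep X).1 hX
      exact (hC.eq_of_isCycle_subset hD (hDX.trans hXC)).ge.trans hDX

/-! ### Minors -/

section Minors

variable {V α : Type u} {M N : Matroid α}

lemma IsMinor.delete_or_contract_of_ne (h : IsMinor N M) (hne : N ≠ M) :
    ∃ e ∈ M.E, IsMinor N (M ／ {e}) ∨ IsMinor N (M ＼ {e}) := by
  obtain ⟨C, D, rfl⟩ := h
  change M ／ C ＼ D ≠ M at hne
  by_cases hC : Disjoint C M.E
  · rw [contract_eq_self_iff.2 hC, ne_eq, delete_eq_self_iff, not_disjoint_iff] at hne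
    obtain ⟨e, heD, heM⟩ := hne
    refine ⟨e, heM, .inr ⟨∅, D, ?_⟩⟩
    change M ／ C ＼ D = M ＼ {e} ／ ∅ ＼ D
    rw [contract_eq_self_iff.2 hC, contract_empty, delete_delete, singleton_union,
      insert_eq_of_mem heD]
  · obtain ⟨e, heC, heM⟩ := not_disjoint_iff.1 hC
    refine ⟨e, heM, .inl ⟨C, D, ?_⟩⟩
    change M ／ C ＼ D = M ／ {e} ／ C ＼ D
    rw [contract_contract, singleton_union, insert_eq_of_mem heC]

namespace Graph

variable {G : Graph V α}

/-- Contraction of the edges in `C`: the vertices are the connected components of `C`. -/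
def contract (G : Graph V α) (C : Set α) : Graph (Quot (G.AdjOn C)) α :=
  ⟨G.E \ C, fun e => (G.inc e).map (Quot.mk _)⟩

lemma incVec_contract (R : Type*) [Semiring R] (G : Graph V α) (C : Set α) :
    (G.contract C).incVec R = Finsupp.lmapDomain R R (Quot.mk (G.AdjOn C)) ∘ G.incVec R := by
  ext1 e
  obtain ⟨u, w, huw⟩ := G.exists_inc_eq e
  have hmap : (G.contract C).inc e = s(Quot.mk _ u, Quot.mk _ w) :=
    (congrArg (Sym2.map _) huw).trans (Sym2.map_mk _ _ _)
  rw [incVec_eq_of_inc_eq hmap, Function.comp_apply, incVec_eq_of_inc_eq huw, map_add,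
    Finsupp.lmapDomain_apply, Finsupp.lmapDomain_apply, Finsupp.mapDomain_single,
    Finsupp.mapDomain_single]

lemma ker_lmapDomain_quotMk_adjOn (G : Graph V α) (C : Set α) :
    LinearMap.ker (Finsupp.lmapDomain (ZMod 2) (ZMod 2) (Quot.mk (G.AdjOn C))) =
      Submodule.span (ZMod 2) (G.incVec (ZMod 2) '' C) := by
  set S := Submodule.span (ZMod 2) (G.incVec (ZMod 2) '' C)
  refine le_antisymm ?_ (Submodule.span_le.2 ?_)
  · have hglue : ∀ u w, G.AdjOn C u w →
        S.mkQ (Finsupp.single u 1) = S.mkQ (Finsupp.single w 1) := by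
      rintro u w ⟨e, he, huw⟩
      rw [Submodule.mkQ_apply, Submodule.mkQ_apply, Submodule.Quotient.eq, ZModModule.sub_eq_add,
        ← incVec_eq_of_inc_eq huw]
      exact Submodule.subset_span (mem_image_of_mem _ he)
    have hfactor : Finsupp.linearCombination (ZMod 2)
        (Quot.lift (fun u => S.mkQ (Finsupp.single u 1)) hglue) ∘ₗ
          Finsupp.lmapDomain (ZMod 2) (ZMod 2) (Quot.mk (G.AdjOn C)) = S.mkQ := by
      ext u
      simp
    conv_rhs => rw [← S.ker_mkQ, ← hfactor]
    exact LinearMap.ker_le_ker_comp _ _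
  · rintro _ ⟨e, he, rfl⟩
    obtain ⟨u, w, huw⟩ := G.exists_inc_eq e
    have hglue : Quot.mk (G.AdjOn C) u = Quot.mk _ w := Quot.sound ⟨e, he, huw⟩
    rw [SetLike.mem_coe, LinearMap.mem_ker, incVec_eq_of_inc_eq huw, map_add,
      Finsupp.lmapDomain_apply, Finsupp.lmapDomain_apply, Finsupp.mapDomain_single,
      Finsupp.mapDomain_single, hglue, ZModModule.add_self]

end Graph

lemma IsGraphic.delete (h : IsGraphic M) (D : Set α) : IsGraphic (M ＼ D) := by
  obtain ⟨V, G, hG⟩ := h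
  obtain ⟨hE, hv⟩ := isGraphicRep_iff.1 hG
  exact ⟨V, G.delete D, isGraphicRep_iff.2 ⟨congrArg (· \ D) hE, hv.delete D⟩⟩

lemma IsGraphic.contract (h : IsGraphic M) (C : Set α) : IsGraphic (M ／ C) := by
  obtain ⟨V, G, hG⟩ := h
  obtain ⟨hE, hv⟩ := isGraphicRep_iff.1 hG
  rw [← contract_inter_ground_eq]
  refine ⟨_, G.contract (C ∩ M.E), isGraphicRep_iff.2 ⟨congrArg (· \ (C ∩ M.E)) hE, ?_⟩⟩
  rw [Graph.incVec_contract]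
  exact hv.contract inter_subset_right _ (G.ker_lmapDomain_quotMk_adjOn _)

lemma IsGraphic.of_isMinor (h : IsGraphic M) (hN : IsMinor N M) : IsGraphic N := by
  obtain ⟨C, D, rfl⟩ := hN
  exact (h.contract C).delete D

end Minors

/-! ### A counting bound for graphic matroids -/

section NotGraphic

variable {V α : Type u} {G : Graph V α} {N : Matroid α}

lemma Graph.card_support_incVec_le (R : Type*) [Semiring R] (G : Graph V α) (e : α) :
    (G.incVec R e).support.card ≤ 2 := by
  classical
  obtain ⟨u, w, huw⟩ := G.exists_inc_eq e
  rw [Graph.incVec_eq_of_inc_eq huw]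
  exact (Finset.card_le_card (Finsupp.support_add.trans (Finset.union_subset_union
    Finsupp.support_single_subset Finsupp.support_single_subset))).trans Finset.card_le_two

/-- Every nonempty vertex star is codependent, and every edge lies in at most two stars. -/
theorem IsGraphic.mul_ncard_isBase_add_one_le (h : IsGraphic N) (hfin : N.E.Finite) {k : ℕ}
    (hk : ∀ D ⊆ N.E, ¬N✶.Indep D → k ≤ D.ncard) {B : Set α} (hB : N.IsBase B)
    (hne : B.Nonempty) : k * (B.ncard + 1) ≤ 2 * N.E.ncard := by
  classical
  obtain ⟨V, G, hG⟩ := h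
  obtain ⟨-, hv⟩ := isGraphicRep_iff.1 hG
  obtain ⟨E, hE⟩ := hfin.exists_finset_coe
  set T : Finset V := E.biUnion fun e => (G.incVec (ZMod 2) e).support
  have hsupp : ∀ e ∈ B, ∀ v, G.incVec (ZMod 2) e v ≠ 0 → v ∈ T := fun e he v hev =>
    Finset.mem_biUnion.2 ⟨e, Finset.mem_coe.1 (hE ▸ hB.subset_ground he),
      Finsupp.mem_support_iff.2 hev⟩
  have hindep := (hv B hB.subset_ground).1 hB.indep
  have hTne : T.Nonempty := by
    obtain ⟨e, he⟩ := hne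
    obtain ⟨v, hev⟩ := Finsupp.ne_iff.1 (hindep.ne_zero he)
    exact ⟨v, hsupp e he v hev⟩
  have hrank : B.ncard < T.card :=
    ncard_eq_finrank_span (hfin.subset hB.subset_ground) hindep ▸
      Graph.finrank_span_incVec_lt hTne hsupp
  have hstar : ∀ v ∈ T, k ≤ (E.filter fun e => G.incVec (ZMod 2) e v ≠ 0).card := by
    intro v hvT
    obtain ⟨e, he, hev⟩ := Finset.mem_biUnion.1 hvT
    rw [← Set.ncard_coe_finset, Finset.coe_filter]
    simp only [← Finset.mem_coe, hE]
    exact hk _ (sep_subset _ _) (hv.not_dual_indep_support (Finsupp.lapply v)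
      (hE ▸ Finset.mem_coe.2 he) (Finsupp.mem_support_iff.1 hev))
  have hends : ∀ e ∈ E, (T.filter fun v => G.incVec (ZMod 2) e v ≠ 0).card ≤ 2 := fun e _ =>
    (Finset.card_le_card fun v hv => Finsupp.mem_support_iff.2 (Finset.mem_filter.1 hv).2).trans
      (G.card_support_incVec_le _ e)
  have hcount : T.card * k ≤ E.card * 2 :=
    Finset.card_mul_le_card_mul (fun v e => G.incVec (ZMod 2) e v ≠ 0) hstar hends
  calc k * (B.ncard + 1) ≤ k * T.card := Nat.mul_le_mul_left k hrank
    _ ≤ 2 * E.card := by linarith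
    _ = 2 * N.E.ncard := by rw [← hE, Set.ncard_coe_finset]

end NotGraphic

/-! ### Bicircular lift matroids -/

section BicircularLift

variable {V α : Type u} {H : Graph V α} {N : Matroid α} {A B C X : Set α} {f g : α}

lemma IsLiftRep.dep_iff (h : IsLiftRep H N) : N.Dep X ↔ X ⊆ H.E ∧ H.HasTwoCycles X := by
  constructor
  · intro hX
    obtain ⟨C, hCX, hC⟩ := hX.exists_isCircuit_subset
    obtain ⟨C₁, C₂, hC₁, hC₂, hne, hC₁C, hC₂C⟩ := ((h.2 C).1 hC).1.2
    exact ⟨h.1 ▸ hX.subset_ground, C₁, C₂, hC₁, hC₂, hne, hC₁C.trans hCX, hC₂C.trans hCX⟩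
  · rintro ⟨hXE, C₁, C₂, hC₁, hC₂, hne, hC₁X, hC₂X⟩
    have hfinite : {Y | Y ⊆ C₁ ∪ C₂ ∧ Y ⊆ H.E ∧ H.HasTwoCycles Y}.Finite :=
      (hC₁.2.1.union hC₂.2.1).finite_subsets.subset fun Y hY => hY.1
    obtain ⟨D, -, hD⟩ := hfinite.exists_le_minimal (a := C₁ ∪ C₂)
      ⟨Subset.rfl, union_subset hC₁.1 hC₂.1, C₁, C₂, hC₁, hC₂, hne, subset_union_left,
        subset_union_right⟩
    have hDcircuit : H.LiftCircuit D :=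
      ⟨hD.1.2, fun Y hY hYD => hD.2 ⟨hYD.trans hD.1.1, hY⟩ hYD⟩
    exact ((h.2 D).2 hDcircuit).1.superset (hD.1.1.trans (union_subset hC₁X hC₂X)) (h.1 ▸ hXE)

/-- Two cycles in a forest plus an edge share that edge, so their symmetric difference is an
even subset of the forest. -/
lemma Graph.isCycle_unique_of_forall_not_isCycle (hA : A ⊆ H.E) (hforest : ∀ C ⊆ A, ¬H.IsCycle C)
    {C₁ C₂ : Set α} (h₁ : H.IsCycle C₁) (h₂ : H.IsCycle C₂) (hC₁ : C₁ ⊆ insert g A)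
    (hC₂ : C₂ ⊆ insert g A) : C₁ = C₂ := by
  classical
  have hmem {C : Set α} (hC : H.IsCycle C) (hCA : C ⊆ insert g A) : g ∈ C := by
    by_contra hg
    exact hforest C ((subset_insert_iff_of_notMem hg).1 hCA) hC
  have hg₁ := hmem h₁ hC₁
  have hg₂ := hmem h₂ hC₂
  lift C₁ to Finset α using h₁.2.1
  lift C₂ to Finset α using h₂.2.1
  have hsub : ((symmDiff C₁ C₂ : Finset α) : Set α) ⊆ A := by
    intro e he
    rcases Finset.mem_symmDiff.1 he with ⟨he₁, he₂⟩ | ⟨he₂, he₁⟩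
    · exact (hC₁ he₁).resolve_left fun h => he₂ (h ▸ hg₂)
    · exact (hC₂ he₂).resolve_left fun h => he₁ (h ▸ hg₁)
  have hsum : ∑ e ∈ symmDiff C₁ C₂, H.incVec (ZMod 2) e = 0 := by
    rw [sum_symmDiff_of_zmod_two, h₁.sum_incVec_eq_zero, h₂.sum_incVec_eq_zero, add_zero]
  have hempty := linearIndepOn_zmod_two_iff.1 ((Graph.linearIndepOn_incVec_iff hA).2 hforest)
    _ hsub hsum
  rw [symmDiff_eq_bot.1 hempty]

lemma IsLiftRep.indep_insert (h : IsLiftRep H N) (hA : A ⊆ N.E) (hforest : ∀ C ⊆ A, ¬H.IsCycle C)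
    (hg : g ∈ N.E) : N.Indep (insert g A) := by
  rw [← not_dep_iff (insert_subset hg hA), h.dep_iff]
  rintro ⟨-, C₁, C₂, hC₁, hC₂, hne, hC₁A, hC₂A⟩
  exact hne (Graph.isCycle_unique_of_forall_not_isCycle (h.1 ▸ hA) hforest hC₁ hC₂ hC₁A hC₂A)

lemma IsLiftRep.isBase_exchange (h : IsLiftRep H N) (hB : N.IsBase B) (hf : f ∈ B)
    (hforest : ∀ C ⊆ B \ {f}, ¬H.IsCycle C) (hg : g ∈ N.E) (hgB : g ∉ B \ {f}) :
    N.IsBase (insert g (B \ {f})) := by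
  obtain rfl | hgf := eq_or_ne g f
  · rwa [insert_sdiff_singleton, insert_eq_of_mem hf]
  · exact hB.exchange_isBase_of_indep (fun hgB' => hgB ⟨hgB', hgf⟩)
      (h.indep_insert (sdiff_subset.trans hB.subset_ground) hforest hg)

lemma IsLiftRep.isCircuit_dual (h : IsLiftRep H N) (hB : N.IsBase B) (hf : f ∈ B)
    (hforest : ∀ C ⊆ B \ {f}, ¬H.IsCycle C) : N✶.IsCircuit (N.E \ (B \ {f})) := by
  rw [isCircuit_iff_dep_forall_sdiff_singleton_indep]
  constructor
  · rw [← not_indep_iff (by simp)]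
    intro hindep
    have heq := hB.compl_isBase_dual.eq_of_subset_indep hindep
      (sdiff_subset_sdiff_right sdiff_subset)
    have hfmem : f ∈ N.E \ (B \ {f}) := ⟨hB.subset_ground hf, fun hf' => hf'.2 rfl⟩
    exact (heq.superset hfmem).2 hf
  · intro g hg
    convert (h.isBase_exchange hB hf hforest hg.1 hg.2).compl_isBase_dual.indep using 1
    rw [sdiff_sdiff, union_comm, singleton_union]

lemma IsLiftRep.not_isCycle_subset_sdiff_singleton (h : IsLiftRep H N) (hB : N.Indep B)
    (hC : H.IsCycle C) (hCB : C ⊆ B) (hf : f ∈ C) : ∀ D ⊆ B \ {f}, ¬H.IsCycle D := by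
  intro D hDB hD
  have hne : C ≠ D := fun hCD => (hDB (hCD ▸ hf)).2 rfl
  exact (h.dep_iff.2 ⟨h.1 ▸ hB.subset_ground, C, D, hC, hD, hne, hCB,
    hDB.trans sdiff_subset⟩).not_indep hB

lemma IsLiftRep.exists_isCycle_subset_of_isBase (h : IsLiftRep H N) (hB : N.IsBase B)
    (hg : g ∈ N.E) (hgB : g ∉ B) : ∃ C ⊆ B, H.IsCycle C := by
  by_contra! hforest
  have heq := hB.eq_of_subset_indep (h.indep_insert hB.subset_ground hforest hg)
    (subset_insert g B)
  exact hgB (heq.superset (mem_insert g B))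

variable {U : Type*} [AddCommGroup U] [Module (ZMod 2) U] {v : α → U}

/-- The cocircuits obtained by removing `f` and `g` from `B` have symmetric difference
`{f, g}`. -/
lemma IsLiftRep.not_dual_indep_pair (h : IsLiftRep H N) (hv : IsLinearRep (ZMod 2) v N✶)
    (hB : N.IsBase B) (hC : H.IsCycle C) (hCB : C ⊆ B) (hf : f ∈ C) (hg : g ∈ C) (hfg : f ≠ g) :
    ¬N✶.Indep {f, g} := by
  classical
  intro hindep
  have hcocircuit {x : α} (hx : x ∈ C) : N✶.IsCircuit (N.E \ (B \ {x})) :=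
    h.isCircuit_dual hB (hCB hx) (h.not_isCycle_subset_sdiff_singleton hB.indep hC hCB hx)
  obtain ⟨s, hs, hs0⟩ := hv.exists_finset_of_isCircuit (hcocircuit hf)
  obtain ⟨t, ht, ht0⟩ := hv.exists_finset_of_isCircuit (hcocircuit hg)
  have hsymm : ((symmDiff s t : Finset α) : Set α) = {f, g} := by
    have hfB := hCB hf
    have hgB := hCB hg
    have hfE := hB.subset_ground hfB
    have hgE := hB.subset_ground hgB
    rw [Finset.coe_symmDiff, hs, ht]
    ext x
    simp only [Set.mem_symmDiff, mem_sdiff, mem_singleton_iff, mem_insert_iff]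
    grind
  have hempty := linearIndepOn_zmod_two_iff.1 ((hv _ hindep.subset_ground).1 hindep) _
    hsymm.subset (by rw [sum_symmDiff_of_zmod_two, hs0, ht0, add_zero])
  rw [hempty, Finset.coe_empty] at hsymm
  exact notMem_empty f (hsymm.superset (mem_insert f {g}))

lemma IsLiftRep.exists_isCycle_singleton_of_isBase (h : IsLiftRep H N)
    (hv : IsLinearRep (ZMod 2) v N✶) (hcosimple : ∀ e ∈ N.E, ∀ f ∈ N.E, N✶.Indep {e, f})
    (hB : N.IsBase B) (hg : g ∈ N.E) (hgB : g ∉ B) : ∃ f ∈ B, H.IsCycle {f} := by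
  obtain ⟨C, hCB, hC⟩ := h.exists_isCycle_subset_of_isBase hB hg hgB
  obtain ⟨f, hf⟩ := hC.2.2.1
  have hsingleton : C = {f} := by
    refine eq_singleton_iff_unique_mem.2 ⟨hf, fun f' hf' => ?_⟩
    by_contra hne
    exact h.not_dual_indep_pair hv hB hC hCB hf' hf hne
      (hcosimple f' (hB.subset_ground (hCB hf')) f (hB.subset_ground (hCB hf)))
  exact ⟨f, hCB hf, hsingleton ▸ hC⟩

/-- Exchanging a loop of the graph in a base for an element `g` outside makes `g` a loop as
well. -/
theorem not_isBicircularLift_of_simple_of_cosimple (hv : IsLinearRep (ZMod 2) v N✶)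
    (hne : N.E.Nonempty) (hsimple : ∀ e ∈ N.E, ∀ f ∈ N.E, N.Indep {e, f})
    (hcosimple : ∀ e ∈ N.E, ∀ f ∈ N.E, N✶.Indep {e, f}) : ¬IsBicircularLift N := by
  rintro ⟨V, H, h⟩
  obtain ⟨e, he⟩ := hne
  obtain ⟨B, hB, heB⟩ : ∃ B, N.IsBase B ∧ e ∉ B := by
    have hdual : N✶.Indep {e} := by simpa using hcosimple e he e he
    simpa using (dual_indep_iff_exists (by simpa using he)).1 hdual
  obtain ⟨f, hfB, hf⟩ := h.exists_isCycle_singleton_of_isBase hv hcosimple hB he heB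
  have hforest := h.not_isCycle_subset_sdiff_singleton hB.indep hf (singleton_subset_iff.2 hfB) rfl
  have hB' := h.isBase_exchange hB hfB hforest he fun heB' => heB heB'.1
  have hfe : f ≠ e := fun hfe => heB (hfe ▸ hfB)
  obtain ⟨g, hgB', hg⟩ := h.exists_isCycle_singleton_of_isBase hv hcosimple hB'
    (hB.subset_ground hfB) (by simp [hfe])
  have hge : g = e := hgB'.resolve_right fun hgB => hforest {g} (singleton_subset_iff.2 hgB) hg
  subst hge
  have hpair : N.Dep {f, g} := h.dep_iff.2 ⟨pair_subset (hf.1 rfl) (hg.1 rfl), {f}, {g}, hf, hg,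
    singleton_injective.ne hfe, by simp, by simp⟩
  exact hpair.not_indep (hsimple f (hB.subset_ground hfB) g he)

end BicircularLift

/-! ### Dual graphs from orthogonality -/

section DualGraph

/-- The copy of a graph on the edge type `ι` whose edges are relabelled by `edge : ι ↪ α`. Its
vertices are lifted to the universe that `IsGraphic` requires; off the range of `edge` the
incidences are arbitrary. -/
noncomputable def Graph.mapEdge {α : Type u} {W ι : Type} [Nonempty W] (D : Graph W ι)
    (edge : ι ↪ α) : Graph (ULift.{u} W) α where
  E := edge '' D.E
  inc := Function.extend edge (fun p => (D.inc p).map ULift.up) fun _ =>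
    Sym2.diag (Classical.arbitrary _)

variable {α : Type u} {W ι : Type} [Nonempty W] {D : Graph W ι} {R : Type*} [Semiring R]
  {edge : ι ↪ α}

lemma Graph.incVec_mapEdge (p : ι) (k : W) :
    (D.mapEdge edge).incVec R (edge p) ⟨k⟩ = D.incVec R p k := by
  classical
  obtain ⟨u, w, huw⟩ := D.exists_inc_eq p
  have hinc : (D.mapEdge edge).inc (edge p) = s(⟨u⟩, ⟨w⟩) := by
    simp [Graph.mapEdge, edge.injective.extend_apply, huw]
  simp [incVec_eq_of_inc_eq huw, incVec_eq_of_inc_eq hinc, Finsupp.single_apply]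

lemma isGraphic_dual_of_orthogonal [Fintype W] {U : Type*} [AddCommGroup U] [Module (ZMod 2) U]
    {v : α → U} {M : Matroid α} {B : Set α} {E : Finset ι} (hD : D.E = E)
    (hE : M.E = (E.map edge : Finset α)) (hv : IsLinearRep (ZMod 2) v M) (hB : M.IsBase B)
    (hcard : B.ncard + Fintype.card W ≤ E.card + 1)
    (horth : ∀ x y : ι → ZMod 2, ∑ p ∈ E, x p • v (edge p) = 0 →
      ∑ p ∈ E, y p • D.incVec (ZMod 2) p = 0 → ∑ p ∈ E, x p * y p = 0) :
    IsGraphic M✶ := by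
  refine ⟨ULift W, D.mapEdge edge, isGraphicRep_iff.2 ⟨?_, hv.dual hE hB ?_ ?_⟩⟩
  · rw [dual_ground, hE, Finset.coe_map, Graph.mapEdge, hD]
  · have hlt := (D.mapEdge edge).finrank_span_incVec_lt (X := (E.map edge : Finset α))
      Finset.univ_nonempty fun _ _ v _ => Finset.mem_univ v
    rw [Finset.card_univ, Fintype.card_ulift] at hlt
    rw [Finset.card_map]
    omega
  · intro x y hx hy
    rw [Finset.sum_map] at hx hy ⊢
    refine horth _ _ hx (Finsupp.ext fun k => ?_)
    have hk := DFunLike.congr_fun hy (ULift.up k)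
    simpa only [Finsupp.finsetSum_apply, Finsupp.smul_apply, Graph.incVec_mapEdge,
      Finsupp.zero_apply] using hk

end DualGraph

/-! ### The graph `K₃,₃` -/

/-- A labelling of the vertices and edges of a copy of `K₃,₃`: the sides are the ranges of `left`
and `right`, and `edge (i, j)` joins `left i` to `right j`. -/
structure K33Labelling {V α : Type u} (G : Graph V α) where
  left : Fin 3 ↪ V
  right : Fin 3 ↪ V
  left_ne_right : ∀ i j, left i ≠ right j
  edge : Fin 3 × Fin 3 ↪ α
  E_eq : G.E = range edge
  inc_edge : ∀ p, G.inc (edge p) = s(left p.1, right p.2)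

lemma IsK33.nonempty_labelling {V α : Type u} {G : Graph V α} (h : IsK33 G) :
    Nonempty (K33Labelling G) := by
  obtain ⟨a, b, ha, hb, hab, ed, hed, hE, hinc⟩ := h
  exact ⟨⟨a, ha⟩, ⟨b, hb⟩, fun i j hij => (disjoint_iff_inter_eq_empty.2 hab).ne_of_mem
    (mem_range_self i) (mem_range_self j) hij, ⟨ed, hed⟩, hE, hinc⟩

namespace K33Labelling

open Module

variable {V α : Type u} {G : Graph V α} {M : Matroid α}

/-- `K₃,₃` is edge-transitive. -/
lemma exists_edge_zero_eq (L : K33Labelling G) {e : α} (he : e ∈ G.E) :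
    ∃ L' : K33Labelling G, L'.edge (0, 0) = e := by
  obtain ⟨⟨i, j⟩, rfl⟩ := L.E_eq.subset he
  refine ⟨⟨(Equiv.swap 0 i).toEmbedding.trans L.left, (Equiv.swap 0 j).toEmbedding.trans L.right,
    fun _ _ => L.left_ne_right _ _,
    ((Equiv.swap 0 i).prodCongr (Equiv.swap 0 j)).toEmbedding.trans L.edge, ?_,
    fun _ => L.inc_edge _⟩, by simp⟩
  rw [Function.Embedding.coe_trans, Equiv.coe_toEmbedding, EquivLike.range_comp, L.E_eq]

lemma coe_map_edge_univ (L : K33Labelling G) :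
    ((Finset.univ.map L.edge : Finset α) : Set α) = G.E := by
  rw [Finset.coe_map, Finset.coe_univ, image_univ, L.E_eq]

lemma finite_E (L : K33Labelling G) : G.E.Finite :=
  L.coe_map_edge_univ ▸ Finset.finite_toSet _

lemma ncard_E (L : K33Labelling G) : G.E.ncard = 9 := by
  rw [← L.coe_map_edge_univ, ncard_coe_finset, Finset.card_map]
  rfl

lemma incVec_edge (L : K33Labelling G) (p : Fin 3 × Fin 3) : G.incVec (ZMod 2) (L.edge p) =
    Finsupp.single (L.left p.1) 1 + Finsupp.single (L.right p.2) 1 :=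
  Graph.incVec_eq_of_inc_eq (L.inc_edge p)

lemma incVec_edge_left (L : K33Labelling G) (p : Fin 3 × Fin 3) (i : Fin 3) :
    G.incVec (ZMod 2) (L.edge p) (L.left i) = if p.1 = i then 1 else 0 := by
  classical
  simp [L.incVec_edge, Finsupp.single_apply, (L.left_ne_right _ _).symm]

lemma incVec_edge_right (L : K33Labelling G) (p : Fin 3 × Fin 3) (j : Fin 3) :
    G.incVec (ZMod 2) (L.edge p) (L.right j) = if p.2 = j then 1 else 0 := by
  classical
  simp [L.incVec_edge, Finsupp.single_apply, L.left_ne_right]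

lemma finrank_span_incVec_lt (L : K33Labelling G) (X : Set α) (hX : X ⊆ G.E) :
    finrank (ZMod 2) (Submodule.span (ZMod 2) (G.incVec (ZMod 2) '' X)) < 6 := by
  classical
  let T : Finset V := Finset.univ.map L.left ∪ Finset.univ.map L.right
  have hT : T.card ≤ 6 := (Finset.card_union_le _ _).trans (by simp)
  refine (Graph.finrank_span_incVec_lt (T := T) ⟨L.left 0, by simp [T]⟩ ?_).trans_le hT
  intro e he x hx
  obtain ⟨p, rfl⟩ := L.E_eq.subset (hX he)
  by_contra hxT
  simp only [T, Finset.mem_union, Finset.mem_map, Finset.mem_univ, true_and, not_or,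
    not_exists] at hxT
  exact hx (Graph.incVec_apply_eq_zero (by simp [L.inc_edge, eq_comm (a := x), hxT]))

lemma exists_ne_of_sum_incVec_eq_zero (L : K33Labelling G) {s : Finset (Fin 3 × Fin 3)}
    (hs : ∑ p ∈ s, G.incVec (ZMod 2) (L.edge p) = 0) {p : Fin 3 × Fin 3} (hp : p ∈ s) {x : V}
    (hx : G.incVec (ZMod 2) (L.edge p) x ≠ 0) :
    ∃ q ∈ s, q ≠ p ∧ G.incVec (ZMod 2) (L.edge q) x ≠ 0 := by
  by_contra! hzero
  have hsum := DFunLike.congr_fun hs x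
  rw [Finsupp.finsetSum_apply, Finset.sum_eq_single_of_mem p hp hzero] at hsum
  exact hx hsum

lemma four_le_card_of_sum_incVec_eq_zero (L : K33Labelling G) {s : Finset (Fin 3 × Fin 3)}
    (hne : s.Nonempty) (hs : ∑ p ∈ s, G.incVec (ZMod 2) (L.edge p) = 0) : 4 ≤ s.card := by
  have hrow {i j} (hij : (i, j) ∈ s) : ∃ j' ≠ j, (i, j') ∈ s := by
    obtain ⟨⟨i', j'⟩, hq, hqp, hx⟩ := L.exists_ne_of_sum_incVec_eq_zero hs hij
      (x := L.left i) (by simp [incVec_edge_left])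
    obtain rfl : i' = i := by simpa [incVec_edge_left] using hx
    exact ⟨j', by rintro rfl; exact hqp rfl, hq⟩
  have hcol {i j} (hij : (i, j) ∈ s) : ∃ i' ≠ i, (i', j) ∈ s := by
    obtain ⟨⟨i', j'⟩, hq, hqp, hx⟩ := L.exists_ne_of_sum_incVec_eq_zero hs hij
      (x := L.right j) (by simp [incVec_edge_right])
    obtain rfl : j' = j := by simpa [incVec_edge_right] using hx
    exact ⟨i', by rintro rfl; exact hqp rfl, hq⟩
  obtain ⟨⟨i, j⟩, hij⟩ := hne
  obtain ⟨j', hj', hij'⟩ := hrow hij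
  obtain ⟨k, hk, hkj⟩ := hcol hij
  obtain ⟨l, hl, hlj'⟩ := hcol hij'
  have hfour : ({(i, j), (i, j'), (k, j), (l, j')} : Finset (Fin 3 × Fin 3)).card = 4 := by
    rw [Finset.card_insert_of_notMem, Finset.card_insert_of_notMem, Finset.card_insert_of_notMem,
      Finset.card_singleton] <;> simp [hj', hj'.symm, hk.symm, hl.symm]
  rw [← hfour]
  exact Finset.card_le_card (by simp [Finset.insert_subset_iff, *])

lemma four_le_ncard_of_not_indep (L : K33Labelling G) (hE : M.E = G.E)
    (hv : IsLinearRep (ZMod 2) (G.incVec (ZMod 2)) M) {X : Set α} (hX : X ⊆ M.E)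
    (hdep : ¬M.Indep X) : 4 ≤ X.ncard := by
  rw [hv X hX, linearIndepOn_zmod_two_iff] at hdep
  push Not at hdep
  obtain ⟨t, htX, ht, hne⟩ := hdep
  have htE : t ⊆ Finset.univ.map L.edge := by
    rw [← Finset.coe_subset, coe_map_edge_univ, ← hE]
    exact htX.trans hX
  obtain ⟨s, -, rfl⟩ := Finset.subset_map_iff.1 htE
  rw [Finset.sum_map] at ht
  calc 4 ≤ s.card := L.four_le_card_of_sum_incVec_eq_zero (Finset.map_nonempty.1 hne) ht
    _ = ((s.map L.edge : Finset α) : Set α).ncard := by rw [ncard_coe_finset, Finset.card_map]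
    _ ≤ X.ncard := ncard_le_ncard htX ((L.finite_E.subset hE.subset).subset hX)

lemma indep_pair (L : K33Labelling G) (hE : M.E = G.E)
    (hv : IsLinearRep (ZMod 2) (G.incVec (ZMod 2)) M) {e f : α} (he : e ∈ M.E)
    (hf : f ∈ M.E) : M.Indep {e, f} := by
  by_contra hdep
  have hfour := L.four_le_ncard_of_not_indep hE hv (pair_subset he hf) hdep
  have htwo := ncard_insert_le e {f}
  rw [ncard_singleton] at htwo
  omega

lemma incVec_edge_eq_add_add (L : K33Labelling G) (i i' j j' : Fin 3) :
    G.incVec (ZMod 2) (L.edge (i, j)) = G.incVec (ZMod 2) (L.edge (i, j')) +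
      G.incVec (ZMod 2) (L.edge (i', j')) + G.incVec (ZMod 2) (L.edge (i', j)) := by
  have hcancel (x y z w : V →₀ ZMod 2) : x + y + (z + y) + (z + w) = x + w :=
    calc x + y + (z + y) + (z + w) = x + w + (y + y) + (z + z) := by abel
      _ = x + w := by rw [ZModModule.add_self, ZModModule.add_self, add_zero, add_zero]
  simp only [incVec_edge, hcancel]

lemma exists_square_avoiding : ∀ p q : Fin 3 × Fin 3, ∃ i j, i ≠ p.1 ∧ j ≠ p.2 ∧
    (p.1, j) ≠ q ∧ (i, j) ≠ q ∧ (i, p.2) ≠ q := by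
  decide

/-- Every edge lies in a 4-cycle that avoids any other given edge. -/
lemma dual_indep_pair (L : K33Labelling G) (hE : M.E = G.E)
    (hv : IsLinearRep (ZMod 2) (G.incVec (ZMod 2)) M) {e f : α} (he : e ∈ M.E)
    (hf : f ∈ M.E) : M✶.Indep {e, f} := by
  have hspan (p q : Fin 3 × Fin 3) : G.incVec (ZMod 2) (L.edge p) ∈
      Submodule.span (ZMod 2) (G.incVec (ZMod 2) '' (M.E \ {L.edge p, L.edge q})) := by
    obtain ⟨i, j, hi, hj, hq₁, hq₂, hq₃⟩ := exists_square_avoiding p q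
    have hmem {r} (hrp : r ≠ p) (hrq : r ≠ q) : G.incVec (ZMod 2) (L.edge r) ∈
        Submodule.span (ZMod 2) (G.incVec (ZMod 2) '' (M.E \ {L.edge p, L.edge q})) :=
      Submodule.subset_span (mem_image_of_mem _ ⟨by simp [hE, L.E_eq], by simp [hrp, hrq]⟩)
    rw [← Prod.mk.eta (p := p), L.incVec_edge_eq_add_add p.1 i p.2 j]
    exact add_mem (add_mem (hmem (by simp [Prod.ext_iff, hj]) hq₁)
      (hmem (by simp [Prod.ext_iff, hj]) hq₂)) (hmem (by simp [Prod.ext_iff, hi]) hq₃)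
  rw [hv.dual_indep_iff (pair_subset he hf)]
  obtain ⟨p, rfl⟩ := L.E_eq.subset (hE.subset he)
  obtain ⟨q, rfl⟩ := L.E_eq.subset (hE.subset hf)
  rintro _ (rfl | rfl)
  · exact hspan p q
  · rw [pair_comm]
    exact hspan q p

lemma ncard_le_five_of_indep (L : K33Labelling G) (hE : M.E = G.E)
    (hv : IsLinearRep (ZMod 2) (G.incVec (ZMod 2)) M) {I : Set α} (hI : M.Indep I) :
    I.ncard ≤ 5 := by
  have hIE := hI.subset_ground.trans hE.subset
  rw [ncard_eq_finrank_span (L.finite_E.subset hIE) ((hv I hI.subset_ground).1 hI)]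
  exact Nat.le_of_lt_succ (L.finrank_span_incVec_lt I hIE)

/-- Were `M✶` graphic, all its nonempty vertex stars would have at least four edges, hence it
would have at most four nonisolated vertices and rank at most three. -/
lemma not_isGraphic_dual (L : K33Labelling G) (hE : M.E = G.E)
    (hv : IsLinearRep (ZMod 2) (G.incVec (ZMod 2)) M) : ¬IsGraphic M✶ := by
  intro hgraphic
  obtain ⟨B, hB⟩ := M✶.exists_isBase
  have hcompl := L.ncard_le_five_of_indep hE hv hB.compl_isBase_of_dual.indep
  have hcard := ncard_sdiff_add_ncard_of_subset hB.subset_ground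
    (L.finite_E.subset hE.subset)
  rw [dual_ground, hE, L.ncard_E, ← hE] at hcard
  have hstar : ∀ D ⊆ M✶.E, ¬M✶✶.Indep D → 4 ≤ D.ncard := fun D hD hdep =>
    L.four_le_ncard_of_not_indep hE hv hD (by rwa [dual_dual] at hdep)
  have hbound := hgraphic.mul_ncard_isBase_add_one_le (L.finite_E.subset hE.subset) hstar hB
    (nonempty_of_ncard_ne_zero (by omega))
  rw [dual_ground, hE, L.ncard_E] at hbound
  omega

end K33Labelling

/-! ### Single-element minors -/

/-- The planar dual of `K₃,₃` with the edge `(0, 0)` deleted; its vertices are the four faces of a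
planar drawing. The incidence at `(0, 0)` is a dummy. -/
def k33DeleteDual : Graph (Fin 4) (Fin 3 × Fin 3) where
  E := {(0, 0)}ᶜ
  inc p := ![![s(0, 0), s(0, 1), s(0, 1)],
    ![s(2, 3), s(0, 2), s(0, 3)],
    ![s(2, 3), s(1, 2), s(1, 3)]] p.1 p.2

/-- The planar dual of `K₃,₃` with the edge `(0, 0)` contracted, a wheel with hub `0`; its
vertices are the five faces of a planar drawing. The incidence at `(0, 0)` is a dummy. -/
def k33ContractDual : Graph (Fin 5) (Fin 3 × Fin 3) where
  E := {(0, 0)}ᶜ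
  inc p := ![![s(0, 0), s(1, 3), s(2, 4)],
    ![s(1, 2), s(0, 1), s(0, 2)],
    ![s(3, 4), s(0, 3), s(0, 4)]] p.1 p.2

lemma sum_univ_erase_zero {N : Type*} [AddCommMonoid N] (f : Fin 3 × Fin 3 → N) :
    ∑ p ∈ Finset.univ.erase (0, 0), f p = f (0, 1) + f (0, 2) + f (1, 0) + f (1, 1) + f (1, 2) +
      f (2, 0) + f (2, 1) + f (2, 2) := by
  have herase : (Finset.univ.erase (0, 0) : Finset (Fin 3 × Fin 3)) =
      {(0, 1), (0, 2), (1, 0), (1, 1), (1, 2), (2, 0), (2, 1), (2, 2)} := by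
    decide
  simp [herase, add_assoc]

lemma k33DeleteDual.sum_mul_eq_zero {x y : Fin 3 × Fin 3 → ZMod 2}
    (hrow : ∀ i, ∑ j, x (i, j) = 0) (hcol : ∀ j, ∑ i, x (i, j) = 0) (hx : x (0, 0) = 0)
    (hy : ∑ p ∈ Finset.univ.erase (0, 0), y p • k33DeleteDual.incVec (ZMod 2) p = 0) :
    ∑ p ∈ Finset.univ.erase (0, 0), x p * y p = 0 := by
  rw [sum_univ_erase_zero] at hy ⊢
  obtain ⟨hface₀, hface₁, hface₂, -⟩ :
      y (0, 1) + y (0, 2) + y (1, 1) + y (1, 2) = 0 ∧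
        y (0, 1) + y (0, 2) + y (2, 1) + y (2, 2) = 0 ∧
        y (1, 0) + y (1, 1) + y (2, 0) + y (2, 1) = 0 ∧
        y (1, 0) + y (1, 2) + y (2, 0) + y (2, 2) = 0 := by
    simpa [Fin.forall_fin_succ, Graph.incVec_apply, k33DeleteDual, Sym2.diag] using
      DFunLike.congr_fun hy
  simp only [Fin.forall_fin_succ, Fin.sum_univ_three] at hrow hcol
  -- The cycle `x` is a sum of face boundaries, and `y` is orthogonal to each of these.
  grind

lemma k33ContractDual.sum_mul_eq_zero {x y : Fin 3 × Fin 3 → ZMod 2}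
    (hrow : ∀ i, ∑ j, x (i, j) = 0) (hcol : ∀ j, ∑ i, x (i, j) = 0)
    (hy : ∑ p ∈ Finset.univ.erase (0, 0), y p • k33ContractDual.incVec (ZMod 2) p = 0) :
    ∑ p ∈ Finset.univ.erase (0, 0), x p * y p = 0 := by
  rw [sum_univ_erase_zero] at hy ⊢
  obtain ⟨hface₀, hface₁, hface₂, hface₃, -⟩ :
      y (1, 1) + y (1, 2) + y (2, 1) + y (2, 2) = 0 ∧
        y (0, 1) + y (1, 0) + y (1, 1) = 0 ∧
        y (0, 2) + y (1, 0) + y (1, 2) = 0 ∧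
        y (0, 1) + y (2, 0) + y (2, 1) = 0 ∧
        y (0, 2) + y (2, 0) + y (2, 2) = 0 := by
    simpa [Fin.forall_fin_succ, Graph.incVec_apply, k33ContractDual, Sym2.diag] using
      DFunLike.congr_fun hy
  simp only [Fin.forall_fin_succ, Fin.sum_univ_three] at hrow hcol
  grind

lemma sum_erase_update {ι A N : Type*} [AddCommMonoid N] [DecidableEq ι] {s : Finset ι} {i : ι}
    (x : ι → A) (c : A) (f : ι → A → N) :
    ∑ p ∈ s.erase i, f p (Function.update x i c p) = ∑ p ∈ s.erase i, f p (x p) :=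
  Finset.sum_congr rfl fun p hp => by rw [Function.update_of_ne (Finset.ne_of_mem_erase hp)]

namespace K33Labelling

variable {V α : Type u} {G : Graph V α} {M : Matroid α}

lemma sum_update_eq_zero (L : K33Labelling G) {x : Fin 3 × Fin 3 → ZMod 2} {c : ZMod 2}
    (hx : ∑ p ∈ Finset.univ.erase (0, 0), x p • G.incVec (ZMod 2) (L.edge p) =
      c • G.incVec (ZMod 2) (L.edge (0, 0))) :
    (∀ i, ∑ j, Function.update x (0, 0) c (i, j) = 0) ∧
      ∀ j, ∑ i, Function.update x (0, 0) c (i, j) = 0 := by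
  have hsum : ∑ p, Function.update x (0, 0) c p • G.incVec (ZMod 2) (L.edge p) = 0 := by
    rw [← Finset.add_sum_erase _ _ (Finset.mem_univ (0, 0)), Function.update_self, ← hx,
      sum_erase_update x c fun p a => a • G.incVec (ZMod 2) (L.edge p), ZModModule.add_self]
  constructor
  · intro i
    have hi := DFunLike.congr_fun hsum (L.left i)
    simpa [Finsupp.finsetSum_apply, incVec_edge_left, Fintype.sum_prod_type] using hi
  · intro j
    have hj := DFunLike.congr_fun hsum (L.right j)
    simpa [Finsupp.finsetSum_apply, incVec_edge_right, Fintype.sum_prod_type_right] using hj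

lemma coe_map_edge_erase (L : K33Labelling G) (hE : M.E = G.E) :
    ((Finset.univ.erase (0, 0)).map L.edge : Finset α) = M.E \ {L.edge (0, 0)} := by
  classical
  rw [Finset.map_erase, Finset.coe_erase, coe_map_edge_univ, hE]

lemma isGraphic_dual_delete (L : K33Labelling G) (hE : M.E = G.E)
    (hv : IsLinearRep (ZMod 2) (G.incVec (ZMod 2)) M) : IsGraphic (M ＼ {L.edge (0, 0)})✶ := by
  obtain ⟨B, hB⟩ := (M ＼ {L.edge (0, 0)}).exists_isBase
  have hcard := L.ncard_le_five_of_indep hE hv hB.indep.of_delete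
  refine isGraphic_dual_of_orthogonal (D := k33DeleteDual) (E := Finset.univ.erase (0, 0)) ?_
    (L.coe_map_edge_erase hE).symm (hv.delete _) hB ?_ ?_
  · simp [k33DeleteDual, compl_eq_univ_sdiff]
  · simpa using hcard
  · intro x y hx hy
    obtain ⟨hrow, hcol⟩ := L.sum_update_eq_zero (c := 0) (hx.trans (zero_smul _ _).symm)
    rw [← sum_erase_update x 0 fun p a => a * y p]
    exact k33DeleteDual.sum_mul_eq_zero hrow hcol (Function.update_self ..) hy

lemma isGraphic_dual_contract (L : K33Labelling G) (hE : M.E = G.E)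
    (hv : IsLinearRep (ZMod 2) (G.incVec (ZMod 2)) M) : IsGraphic (M ／ {L.edge (0, 0)})✶ := by
  have heE : L.edge (0, 0) ∈ M.E := by simp [hE, L.E_eq]
  set S := Submodule.span (ZMod 2) (G.incVec (ZMod 2) '' {L.edge (0, 0)}) with hS
  have hrep := hv.contract (singleton_subset_iff.2 heE) S.mkQ S.ker_mkQ
  obtain ⟨B, hB⟩ := (M ／ {L.edge (0, 0)}).exists_isBase
  have hcard : B.ncard ≤ 4 := by
    have hindep : M.Indep {L.edge (0, 0)} := by simpa using L.indep_pair hE hv heE heE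
    obtain ⟨hbase, hdisj⟩ := hindep.contract_isBase_iff.1 hB
    have hfive := L.ncard_le_five_of_indep hE hv hbase.indep
    rw [union_singleton, ncard_insert_of_notMem (disjoint_singleton_right.1 hdisj)
      ((L.finite_E.subset hE.subset).subset (subset_union_left.trans hbase.subset_ground))] at hfive
    omega
  refine isGraphic_dual_of_orthogonal (D := k33ContractDual) (E := Finset.univ.erase (0, 0)) ?_
    (L.coe_map_edge_erase hE).symm hrep hB ?_ ?_
  · simp [k33ContractDual, compl_eq_univ_sdiff]
  · simpa using hcard
  · intro x y hx hy
    obtain ⟨c, hc⟩ : ∃ c : ZMod 2, c • G.incVec (ZMod 2) (L.edge (0, 0)) =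
        ∑ p ∈ Finset.univ.erase (0, 0), x p • G.incVec (ZMod 2) (L.edge p) := by
      rw [← Submodule.mem_span_singleton, ← image_singleton, ← hS,
        ← Submodule.Quotient.mk_eq_zero, ← Submodule.mkQ_apply, map_sum]
      simpa only [map_smul, Function.comp_apply] using hx
    obtain ⟨hrow, hcol⟩ := L.sum_update_eq_zero hc.symm
    rw [← sum_erase_update x c fun p a => a * y p]
    exact k33ContractDual.sum_mul_eq_zero hrow hcol hy

lemma isGraphic_of_isStrictMinor_dual (L : K33Labelling G) (hE : M.E = G.E)
    (hv : IsLinearRep (ZMod 2) (G.incVec (ZMod 2)) M) {N : Matroid α}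
    (hN : IsStrictMinor N M✶) : IsGraphic N := by
  obtain ⟨e, he, h⟩ := hN.1.delete_or_contract_of_ne hN.2
  obtain ⟨L', rfl⟩ := L.exists_edge_zero_eq (hE.subset he)
  rcases h with h | h
  · exact (L'.isGraphic_dual_delete hE hv).of_isMinor (dual_delete M _ ▸ h)
  · exact (L'.isGraphic_dual_contract hE hv).of_isMinor (dual_contract M _ ▸ h)

end K33Labelling

theorem statement_3 {α : Type u} (N : Matroid α)
    (h : ∃ (V : Type u) (G : Graph V α), IsK33 G ∧ IsGraphicRep G N✶) :
    ExcludedMinorBL N ∧ ¬ IsBicircularLift N := by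
  obtain ⟨V, G, hK, hG⟩ := h
  obtain ⟨M, rfl⟩ : ∃ M, N = M✶ := ⟨N✶, N.dual_dual.symm⟩
  rw [dual_dual] at hG
  obtain ⟨hE, hv⟩ := isGraphicRep_iff.1 hG
  obtain ⟨L⟩ := hK.nonempty_labelling
  have hnotLift : ¬IsBicircularLift M✶ := by
    refine not_isBicircularLift_of_simple_of_cosimple (v := G.incVec (ZMod 2)) ?_ ?_ ?_ ?_
    · rwa [dual_dual]
    · exact ⟨L.edge (0, 0), by simp [hE, L.E_eq]⟩
    · exact fun e he f hf => L.dual_indep_pair hE hv he hf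
    · exact fun e he f hf => M.dual_dual.symm ▸ L.indep_pair hE hv he hf
  have hnotGraphic : ¬IsGraphic M✶ := L.not_isGraphic_dual hE hv
  exact ⟨⟨not_or.2 ⟨hnotGraphic, hnotLift⟩, fun N' hN' =>
    .inl (L.isGraphic_of_isStrictMinor_dual hE hv hN')⟩, hnotLift⟩

end BLFormal
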